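/- Let K be a cyclic quartic extension of ℚ (a Galois extension of degree 4 with cyclic Galois group) and let F be its unique nontrivial intermediate subfield. Then F = ℚ(√n) for some positive squarefree integer n of the form n = 2^a·p₁·p₂⋯p_k, where a ∈ {0,1} and the p_i are primes satisfying p_i ≡ 1 (mod 4). In particular, F is equal to none of ℚ(√−1), ℚ(√−3), and ℚ(√3). -/

import Mathlib

lemma cq_sum {c : ℕ} {u v : ℚ} (hv : v ≠ 0) (h : (c : ℚ) * v ^ 2 = u ^ 2 + 1) :
    ∃ m a b : ℕ, m ≠ 0 ∧ c * m ^ 2 = a ^ 2 + b ^ 2 := by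
  refine ⟨(v.num * u.den).natAbs, (u.num * v.den).natAbs, u.den * v.den, ?_, ?_⟩
  · simp [hv]
  · zify
    rw [sq_abs, sq_abs]
    have hu' : (u.den : ℚ) ≠ 0 := by exact_mod_cast u.den_ne_zero
    have hv' : (v.den : ℚ) ≠ 0 := by exact_mod_cast v.den_ne_zero
    rw [← Rat.num_div_den u, ← Rat.num_div_den v] at h
    field_simp at h
    have : (c : ℚ) * (v.num * u.den) ^ 2 = (u.num * v.den) ^ 2 + (u.den * v.den) ^ 2 := by
      linear_combination h
    exact_mod_cast this

lemma cq_even {c : ℕ} (hc : c ≠ 0) {u v : ℚ} (h : (c : ℚ) * v ^ 2 = u ^ 2 + 1)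
    {q : ℕ} (hq : q.Prime) (hq3 : q % 4 = 3) : Even (padicValNat q c) := by
  have hv : v ≠ 0 := by
    rintro rfl
    nlinarith [sq_nonneg u]
  obtain ⟨m, a, b, hm, hab⟩ := cq_sum hv h
  have hfact := Fact.mk hq
  have h2 := (Nat.eq_sq_add_sq_iff (n := c * m ^ 2)).1 ⟨a, b, hab⟩
  by_cases hd : q ∈ (c * m ^ 2).primeFactors
  · have := h2 q hd hq3
    rw [padicValNat.mul hc (pow_ne_zero 2 hm), padicValNat.pow] at this
    rw [Nat.even_add] at this
    exact this.2 (even_two_mul _)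
  · have : ¬ q ∣ c := fun hh => hd (by
      simp [hq, hc, hm]
      exact Dvd.dvd.mul_right hh _)
    rw [padicValNat.eq_zero_of_not_dvd this]
    exact Even.zero

theorem subfield_of_cyclic_quartic_extension
    (K : Type*) [Field K] [NumberField K] [IsGalois ℚ K]
    (hdeg : Module.finrank ℚ K = 4) (hcyc : IsCyclic (K ≃ₐ[ℚ] K))
    (F : IntermediateField ℚ K) (hFbot : F ≠ ⊥) (hFtop : F ≠ ⊤) :
    (∃ n : ℕ, 0 < n ∧ Squarefree n ∧
      (∃ (a : ℕ) (s : Finset ℕ), a ≤ 1 ∧ (∀ p ∈ s, p.Prime ∧ p % 4 = 1) ∧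
        n = 2 ^ a * ∏ p ∈ s, p) ∧
      ∃ x : K, x ^ 2 = (n : K) ∧ IntermediateField.adjoin ℚ {x} = F) ∧
    (∀ x : K, x ∈ F → x ^ 2 ≠ (-1 : K) ∧ x ^ 2 ≠ (-3 : K) ∧ x ^ 2 ≠ (3 : K)) := by
  obtain ⟨σ, hσ⟩ := hcyc.exists_generator
  have hσ2 : σ (2 : K) = 2 := map_ofNat σ 2
  have hcard : Nat.card (K ≃ₐ[ℚ] K) = 4 := by rw [IsGalois.card_aut_eq_finrank, hdeg]
  have hord : orderOf σ = 4 := by rw [orderOf_eq_card_of_forall_mem_zpowers hσ, hcard]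
  have h4 : σ ^ 4 = 1 := by rw [← hord]; exact pow_orderOf_eq_one σ
  have hall : ∀ τ : K ≃ₐ[ℚ] K, τ = 1 ∨ τ = σ ∨ τ = σ ^ 2 ∨ τ = σ ^ 3 := by
    intro τ
    classical
    obtain ⟨k, hk, rfl⟩ := (mem_zpowers_iff_mem_range_orderOf.1 (hσ τ) |> Finset.mem_image.1)
    rw [hord, Finset.mem_range] at hk
    interval_cases k <;> simp
  have hfix : ∀ z : K, σ z = z → ∃ r : ℚ, (r : K) = z := by
    intro z hz
    have : z ∈ (⊥ : IntermediateField ℚ K) := by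
      rw [IsGalois.mem_bot_iff_fixed]
      intro τ
      rcases hall τ with rfl | rfl | rfl | rfl <;> simp [pow_succ, hz]
    obtain ⟨r, hr⟩ := IntermediateField.mem_bot.1 this
    exact ⟨r, by simpa using hr⟩
  -- σ is not in the fixing subgroup
  have hσF : σ ∉ F.fixingSubgroup := by
    intro h
    apply hFbot
    rw [eq_bot_iff]
    intro z hz
    have := (IntermediateField.mem_fixingSubgroup_iff F σ).1 h z hz
    obtain ⟨r, hr⟩ := hfix z this
    exact IntermediateField.mem_bot.2 ⟨r, by simpa using hr⟩
  have hσ3F : σ ^ 3 ∉ F.fixingSubgroup := by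
    intro h
    apply hσF
    have h9 : (σ ^ 3) ^ 3 = σ := by
      rw [← pow_mul, show 3 * 3 = 4 + 4 + 1 by norm_num, pow_add, pow_add, h4]; simp
    rw [← h9]
    exact pow_mem h 3
  have hσ2F : σ ^ 2 ∈ F.fixingSubgroup := by
    by_contra h
    apply hFtop
    have hb : F.fixingSubgroup = ⊥ := by
      rw [eq_bot_iff]
      intro τ hτ
      rcases hall τ with rfl | rfl | rfl | rfl
      · simp
      · exact absurd hτ hσF
      · exact absurd hτ h
      · exact absurd hτ hσ3F
    rw [← IsGalois.fixedField_fixingSubgroup F, hb]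
    exact IntermediateField.fixedField_bot
  have hF : ∀ z, z ∈ F ↔ σ (σ z) = z := by
    intro z
    constructor
    · intro hz
      have := (IntermediateField.mem_fixingSubgroup_iff F _).1 hσ2F z hz
      simpa [pow_succ] using this
    · intro hz
      rw [← IsGalois.fixedField_fixingSubgroup F, IntermediateField.mem_fixedField_iff]
      intro τ hτ
      rcases hall τ with rfl | rfl | rfl | rfl
      · simp
      · exact absurd hτ hσF
      · simpa [pow_succ] using hz
      · exact absurd hτ hσ3F
  -- the element w
  obtain ⟨w, hwF, hw⟩ : ∃ w : K, w ∈ F ∧ w * σ w = -1 := by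
    obtain ⟨z, hz⟩ : ∃ z, σ (σ z) ≠ z := by
      by_contra! h
      exact hFtop (eq_top_iff.2 fun z _ => (hF z).2 (h z))
    have hz4 : σ (σ (σ (σ z))) = z := by
      have := congrArg (fun τ : K ≃ₐ[ℚ] K => τ z) h4
      simpa [pow_succ] using this
    obtain ⟨y, hy⟩ : ∃ y, y = z - σ (σ z) := ⟨_, rfl⟩
    have hy0 : y ≠ 0 := by rw [hy]; exact sub_ne_zero.2 hz.symm
    have hyσ : σ (σ y) = -y := by rw [hy]; simp [hz4]
    have hσy : σ y ≠ 0 := by simpa using hy0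
    refine ⟨σ y / y, ?_, ?_⟩
    · rw [hF, map_div₀, map_div₀, hyσ, map_neg]
      field_simp
    · rw [map_div₀, hyσ]
      field_simp
  have hdecomp : ∀ x : K, x ≠ 0 → σ x = -x → ∀ z ∈ F, ∃ u v : ℚ, z = u + v * x := by
    intro x hx0 hx z hz
    have hz2 := (hF z).1 hz
    obtain ⟨u, hu⟩ := hfix ((z + σ z) / 2) (by simp [hz2, hσ2, add_comm])
    obtain ⟨v, hv⟩ := hfix ((z - σ z) / (2 * x)) (by
      simp [hz2, hσ2, hx]
      field_simp
      ring)
    refine ⟨u, v, ?_⟩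
    rw [hu, hv]
    field_simp
    ring
  have key : ∀ (x : K) (c : ℚ), x ≠ 0 → σ x = -x → x ^ 2 = c → ∃ u v : ℚ, c * v ^ 2 = u ^ 2 + 1 := by
    intro x c hx0 hx hc
    obtain ⟨u, v, huv⟩ := hdecomp x hx0 hx w hwF
    refine ⟨u, v, ?_⟩
    rw [huv] at hw
    simp [hx] at hw
    have : (c : K) * v ^ 2 = u ^ 2 + 1 := by
      rw [← hc]; linear_combination -hw
    exact_mod_cast this
  refine ⟨?_, ?_⟩
  · obtain ⟨z, hzF, hz⟩ : ∃ z ∈ F, σ z ≠ z := by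
      by_contra! h
      exact hσF ((IntermediateField.mem_fixingSubgroup_iff F σ).2 h)
    obtain ⟨x₀, hx₀⟩ : ∃ y, y = z - σ z := ⟨_, rfl⟩
    have hx0 : x₀ ≠ 0 := by rw [hx₀]; exact sub_ne_zero.2 hz.symm
    have hxσ : σ x₀ = -x₀ := by rw [hx₀]; simp [(hF z).1 hzF]
    obtain ⟨r, hr⟩ := hfix (x₀ ^ 2) (by simp [hxσ])
    obtain ⟨u, v, huv⟩ := key x₀ r hx0 hxσ hr.symm
    have hrpos : 0 < r := by
      by_contra! h
      nlinarith [sq_nonneg u, sq_nonneg v, mul_nonneg (neg_nonneg.2 h) (sq_nonneg v)]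
    have hnum : 0 < r.num := Rat.num_pos.2 hrpos
    obtain ⟨n, m, hn⟩ := Nat.sq_mul_squarefree (r.num.natAbs * r.den)
    obtain ⟨hnm, hsq⟩ := hn
    have hprod : r.num.natAbs * r.den ≠ 0 := by
      simp [hrpos.ne']
    have hm0 : m ≠ 0 := by rintro rfl; exact hprod (by rw [← hnm]; simp)
    have hn0 : n ≠ 0 := hsq.ne_zero
    have hmK : (m : K) ≠ 0 := by exact_mod_cast hm0
    have hdenK : (r.den : K) ≠ 0 := by exact_mod_cast r.den_ne_zero
    obtain ⟨x, hx⟩ : ∃ x, x = x₀ * r.den / m := ⟨_, rfl⟩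
    have hxne : x ≠ 0 := by rw [hx]; exact div_ne_zero (mul_ne_zero hx0 hdenK) hmK
    have hxs : σ x = -x := by rw [hx]; simp [hxσ]; ring
    have hxn : x ^ 2 = (n : K) := by
      have e1 : (m : ℚ) ^ 2 * n = r * r.den ^ 2 := by
        have : ((m ^ 2 * n : ℕ) : ℚ) = ((r.num.natAbs * r.den : ℕ) : ℚ) := by rw [hnm]
        push_cast at this
        rw [this, ← Int.cast_natCast r.num.natAbs, Int.natAbs_of_nonneg hnum.le]
        have := Rat.mul_den_eq_num r
        rw [← this]; ring
      have e2 : (m : K) ^ 2 * n = r * r.den ^ 2 := by exact_mod_cast e1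
      rw [hx, div_pow, mul_pow, ← hr, ← e2]
      field_simp
    obtain ⟨u', v', huv'⟩ := key x n hxne hxs (by simpa using hxn)
    have hp : ∀ p ∈ n.primeFactors, p % 4 ≠ 3 := by
      intro p hp h3
      have hpp := Nat.prime_of_mem_primeFactors hp
      have hfact := Fact.mk hpp
      have he := cq_even hn0 huv' hpp h3
      have h1 : 1 ≤ padicValNat p n := one_le_padicValNat_of_dvd hn0 (Nat.dvd_of_mem_primeFactors hp)
      have h2 : padicValNat p n ≤ 1 := by
        rw [← Nat.factorization_def _ hpp]
        exact hsq.natFactorization_le_one p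
      have : padicValNat p n = 1 := le_antisymm h2 h1
      rw [this] at he
      exact absurd he (by decide)
    have hp1 : ∀ p ∈ n.primeFactors.erase 2, p.Prime ∧ p % 4 = 1 := by
      intro p hpm
      rw [Finset.mem_erase] at hpm
      have hpp := Nat.prime_of_mem_primeFactors hpm.2
      have := hp p hpm.2
      have := hpp.eq_two_or_odd
      exact ⟨hpp, by omega⟩
    refine ⟨n, Nat.pos_of_ne_zero hn0, hsq, ?_, x, hxn, ?_⟩
    · by_cases h2 : 2 ∈ n.primeFactors
      · refine ⟨1, n.primeFactors.erase 2, le_rfl, hp1, ?_⟩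
        rw [pow_one, Finset.mul_prod_erase n.primeFactors (fun p => p) h2]
        exact (Nat.prod_primeFactors_of_squarefree hsq).symm
      · refine ⟨0, n.primeFactors.erase 2, by norm_num, hp1, ?_⟩
        rw [pow_zero, one_mul, Finset.erase_eq_of_notMem h2]
        exact (Nat.prod_primeFactors_of_squarefree hsq).symm
    · apply le_antisymm
      · rw [IntermediateField.adjoin_simple_le_iff, hF, hxs, map_neg, hxs, neg_neg]
      · intro t ht
        obtain ⟨a, b, rfl⟩ := hdecomp x hxne hxs t ht
        have hxm := IntermediateField.mem_adjoin_simple_self ℚ x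
        exact add_mem (by simpa using (IntermediateField.adjoin ℚ {x}).algebraMap_mem a)
          (mul_mem (by simpa using (IntermediateField.adjoin ℚ {x}).algebraMap_mem b) hxm)
  · intro x hxF
    have gen : ∀ c : ℚ, c ≠ 0 → x ^ 2 = (c : K) → (∃ r : ℚ, r ^ 2 = c) ∨
        ∃ u v : ℚ, c * v ^ 2 = u ^ 2 + 1 := by
      intro c hc h
      have h' : (σ x) ^ 2 = x ^ 2 := by rw [← map_pow, h]; simp
      rcases sq_eq_sq_iff_eq_or_eq_neg.1 h' with h1 | h1
      · obtain ⟨r, hr⟩ := hfix x h1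
        left
        refine ⟨r, ?_⟩
        rw [← hr] at h
        exact_mod_cast h
      · right
        refine key x c ?_ h1 h
        rintro rfl
        apply hc
        simpa using h.symm
    refine ⟨fun h => ?_, fun h => ?_, fun h => ?_⟩
    · rcases gen (-1) (by norm_num) (by simpa using h) with ⟨r, hr⟩ | ⟨u, v, huv⟩
      · nlinarith [sq_nonneg r]
      · nlinarith [sq_nonneg u, sq_nonneg v]
    · rcases gen (-3) (by norm_num) (by simpa using h) with ⟨r, hr⟩ | ⟨u, v, huv⟩
      · nlinarith [sq_nonneg r]
      · nlinarith [sq_nonneg u, sq_nonneg v]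
    · rcases gen 3 (by norm_num) (by simpa using h) with ⟨r, hr⟩ | ⟨u, v, huv⟩
      · have : IsSquare ((3 : ℕ) : ℚ) := ⟨r, by rw [← sq, hr]; norm_num⟩
        rw [Rat.isSquare_natCast_iff] at this
        obtain ⟨t, ht⟩ := this
        have : t < 2 := by nlinarith
        interval_cases t <;> omega
      · have hev := cq_even (c := 3) (by norm_num) (by exact_mod_cast huv) Nat.prime_three (by norm_num)
        have hfact := Fact.mk Nat.prime_three
        rw [padicValNat_self] at hev
        exact absurd hev (by decide)
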